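/- Let A be a complex semisimple unital Banach algebra, let p ∈ A be an idempotent and q ∈ A, and suppose there exist a neighbourhood N_p of p and a neighbourhood N_{1−p} of 1 − p such that #σ(qx) = #σ(px) < ∞ for all x ∈ N_p ∪ N_{1−p}. Then q is a scalar multiple of p or q is a scalar multiple of the identity. -/

import Mathlib

open Complex

noncomputable section

/-- The nonzero spectrum `σ'(x) = σ(x) \ {0}` of an element of a complex algebra. -/
def nzSpec {A : Type*} [Ring A] [Algebra ℂ A] (x : A) : Set ℂ :=
  spectrum ℂ x \ {0}

/-- The spectral rank of an element: `rank a = sup_{x ∈ A} #σ'(xa)`, valued in `ℕ∞`. -/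
noncomputable def srank {A : Type*} [Ring A] [Algebra ℂ A] (a : A) : ℕ∞ :=
  ⨆ x : A, (nzSpec (x * a)).encard

/-- The socle of `A`: the set of finite-rank elements. -/
def socle (A : Type*) [Ring A] [Algebra ℂ A] : Set A :=
  {a : A | srank a ≠ ⊤}

/-- `A` is (Jacobson) semisimple: its Jacobson radical is `{0}`. -/
def JacobsonSemisimple (A : Type*) [Ring A] : Prop :=
  TwoSidedIdeal.jacobson (⊥ : TwoSidedIdeal A) = ⊥

/-- `Soc A` is a minimal two-sided ideal: it is a nonzero two-sided ideal containing
no two-sided ideals other than `{0}` and itself. -/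
def SocleIsMinimalTwoSidedIdeal (A : Type*) [Ring A] [Algebra ℂ A] : Prop :=
  ∃ I : TwoSidedIdeal A, (I : Set A) = socle A ∧ I ≠ ⊥ ∧
    ∀ J : TwoSidedIdeal A, J ≤ I → J = ⊥ ∨ J = I

/-- `A` is a prime algebra: all nonzero two-sided ideals `I, J` satisfy `IJ ≠ {0}`. -/
def IsPrimeAlgebra (A : Type*) [Ring A] : Prop :=
  ∀ I J : TwoSidedIdeal A, I ≠ ⊥ → J ≠ ⊥ → ∃ x ∈ I, ∃ y ∈ J, x * y ≠ 0

/-- The left annihilator of the socle equals `{0}`. -/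
def LeftAnnSocleTrivial (A : Type*) [Ring A] [Algebra ℂ A] : Prop :=
  {x : A | ∀ y ∈ socle A, x * y = 0} = {0}

section helpers
set_option linter.unusedSectionVars false
variable {A : Type*} [NormedRing A] [NormOneClass A] [NormedAlgebra ℂ A] [CompleteSpace A]

/-- quasinilpotent elements -/
def QN {A : Type*} [Ring A] [Algebra ℂ A] (x : A) : Prop := spectrum ℂ x ⊆ {0}

theorem QN.comm {a b : A} (h : QN (a * b)) : QN (b * a) := by
  intro z hz
  by_contra h0
  have : z ∈ spectrum ℂ (b * a) \ {0} := ⟨hz, h0⟩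
  rw [spectrum.nonzero_mul_comm] at this
  exact this.2 (h this.1)

theorem QN.isUnit {a : A} (h : QN a) {z : ℂ} (hz : z ≠ 0) : IsUnit (algebraMap ℂ A z - a) := by
  by_contra h0
  exact hz (h (spectrum.mem_iff.2 h0))

theorem eq_zero_of_qn (hss : JacobsonSemisimple A) {a : A} (h : ∀ y, QN (a * y)) : a = 0 := by
  have : a ∈ TwoSidedIdeal.jacobson (⊥ : TwoSidedIdeal A) := by
    rw [TwoSidedIdeal.mem_jacobson_iff]
    intro y
    have h1 := (h y).comm.isUnit (z := -1) (by norm_num)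
    obtain ⟨u, hu⟩ := h1
    refine ⟨-(↑u⁻¹ : A), ?_⟩
    have h2 : (↑u⁻¹ : A) * (algebraMap ℂ A (-1) - y * a) = 1 := by rw [← hu]; simp
    have : -(↑u⁻¹ : A) * y * a + -(↑u⁻¹ : A) - 1 = 0 := by
      rw [← sub_eq_zero] at h2
      rw [← h2]; simp only [map_neg, map_one]; noncomm_ring
    rw [this]; exact zero_mem _
  rw [hss] at this
  simpa using this

theorem QN.exists_pow {a : A} (h : QN a) {ε : ℝ} (hε : 0 < ε) :
    ∀ᶠ m : ℕ in Filter.atTop, ‖a ^ m‖ ≤ ε ^ m := by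
  have h0 : spectralRadius ℂ a = 0 := by
    rw [spectralRadius]
    simp only [ENNReal.iSup_eq_zero]
    intro z hz
    have := h hz
    simp only [Set.mem_singleton_iff] at this
    simp [this]
  have h1 := spectrum.pow_norm_pow_one_div_tendsto_nhds_spectralRadius a
  rw [h0] at h1
  have h2 := (tendsto_order.1 h1).2 (ENNReal.ofReal ε) (by simpa using hε)
  filter_upwards [h2, Filter.eventually_gt_atTop 0] with m hm hm0
  rw [ENNReal.ofReal_lt_ofReal_iff hε] at hm
  have h3 : (‖a ^ m‖ ^ (1 / m : ℝ)) ^ m ≤ ε ^ m := by gcongr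
  rwa [one_div, Real.rpow_inv_natCast_pow (norm_nonneg _) hm0.ne'] at h3

theorem qn_of_pow {a : A} (h : ∀ ε : ℝ, 0 < ε → ∃ m : ℕ, 0 < m ∧ ‖a ^ m‖ ≤ ε ^ m) : QN a := by
  intro z hz
  by_contra h0
  have hz0 : 0 < ‖z‖ := norm_pos_iff.2 h0
  obtain ⟨m, hm0, hm⟩ := h (‖z‖ / 2) (by positivity)
  have h1 := spectrum.norm_le_norm_of_mem (spectrum.pow_mem_pow a m hz)
  rw [norm_pow] at h1
  have h3 : (‖z‖ / 2) ^ m < ‖z‖ ^ m := pow_lt_pow_left₀ (by linarith) (by positivity) hm0.ne'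
  linarith

theorem QN.mul {x k : A} (h : QN x) (hc : Commute x k) : QN (x * k) := by
  apply qn_of_pow
  intro ε hε
  have hp : 0 < ‖k‖ + 1 := by positivity
  obtain ⟨m, hm, hm0⟩ := ((h.exists_pow (div_pos hε hp)).and (Filter.eventually_gt_atTop 0)).exists
  refine ⟨m, hm0, ?_⟩
  rw [hc.mul_pow]
  calc ‖x ^ m * k ^ m‖ ≤ ‖x ^ m‖ * ‖k ^ m‖ := norm_mul_le _ _
    _ ≤ (ε / (‖k‖ + 1)) ^ m * (‖k‖ + 1) ^ m := by
        gcongr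
        exact (norm_pow_le _ _).trans (by gcongr; linarith)
    _ = ε ^ m := by rw [← mul_pow, div_mul_cancel₀ _ hp.ne']

theorem QN.smul {x : A} (h : QN x) (z : ℂ) : QN (z • x) := by
  have := h.mul (k := algebraMap ℂ A z) (Algebra.commutes z x).symm
  rwa [← Algebra.commutes, ← Algebra.smul_def] at this

theorem QN.summable {x : A} (h : QN x) {R : ℝ} (hR : 0 < R) : Summable fun m => ‖x ^ m‖ * R ^ m := by
  have hp : 0 < 1 / (2 * R) := by positivity
  refine Summable.of_norm_bounded_eventually_nat (g := fun m => (1 / 2 : ℝ) ^ m)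
    (summable_geometric_two) ?_
  filter_upwards [h.exists_pow hp] with m hm
  rw [Real.norm_of_nonneg (by positivity)]
  calc ‖x ^ m‖ * R ^ m ≤ (1 / (2 * R)) ^ m * R ^ m := by gcongr
    _ = _ := by rw [← mul_pow]; congr 1; field_simp

/-- `e = n w`-type obstruction -/
theorem QN.idem_eq_zero {n w e : A} (h : QN n) (h1 : n * w = e) (h2 : e * w = w) : e = 0 := by
  have h3 : ∀ m : ℕ, n ^ (m + 1) * w ^ (m + 1) = e := by
    intro m
    induction m with
    | zero => simpa using h1
    | succ k ih =>
      rw [pow_succ n (k+1), pow_succ' w (k+1), mul_assoc, ← mul_assoc n, h1, pow_succ' w k,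
        ← mul_assoc e, h2, ← pow_succ' w k, ih]
  have hp : 0 < 1 / (2 * (‖w‖ + 1)) := by positivity
  have hb : ∀ᶠ m : ℕ in Filter.atTop, ‖e‖ ≤ (1 / 2 : ℝ) ^ m := by
    filter_upwards [h.exists_pow hp, Filter.eventually_gt_atTop 0] with m hm hm0
    obtain ⟨k, rfl⟩ := Nat.exists_eq_succ_of_ne_zero hm0.ne'
    calc ‖e‖ = ‖n ^ (k + 1) * w ^ (k + 1)‖ := by rw [h3]
      _ ≤ ‖n ^ (k + 1)‖ * ‖w ^ (k + 1)‖ := norm_mul_le _ _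
      _ ≤ (1 / (2 * (‖w‖ + 1))) ^ (k + 1) * (‖w‖ + 1) ^ (k + 1) := by
          gcongr
          exact (norm_pow_le _ _).trans (by gcongr; linarith)
      _ = _ := by rw [← mul_pow]; congr 1; field_simp
  have := ge_of_tendsto (tendsto_pow_atTop_nhds_zero_of_lt_one (by norm_num) (by norm_num)) hb
  simpa using this

theorem QN.no_left_inv {n w : A} (h : QN n) : w * n ≠ 1 := by
  intro h1
  have h3 : ∀ m : ℕ, w ^ m * n ^ m = 1 := by
    intro m
    induction m with
    | zero => simp
    | succ k ih =>
      rw [pow_succ w, pow_succ' n, mul_assoc, ← mul_assoc w, h1, one_mul, ih]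
  have hp : 0 < 1 / (2 * (‖w‖ + 1)) := by positivity
  obtain ⟨m, hm, hm0⟩ := ((h.exists_pow hp).and (Filter.eventually_gt_atTop 0)).exists
  have : (1:ℝ) ≤ (1 / 2) ^ m := by
    calc (1:ℝ) = ‖w ^ m * n ^ m‖ := by rw [h3, norm_one]
      _ ≤ ‖w ^ m‖ * ‖n ^ m‖ := norm_mul_le _ _
      _ ≤ (‖w‖ + 1) ^ m * (1 / (2 * (‖w‖ + 1))) ^ m := by
          gcongr
          exact (norm_pow_le _ _).trans (by gcongr; linarith)
      _ = _ := by rw [← mul_pow]; congr 1; field_simp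
  have h4 : (1 / 2 : ℝ) ^ m < 1 := pow_lt_one₀ (by norm_num) (by norm_num) hm0.ne'
  linarith

/-- max principle -/
theorem qn_of_large {a b : A} {S : ℝ} (hS : 0 < S) (h : ∀ s : ℂ, ‖s‖ = S → QN (s • a + b)) : QN b := by
  apply qn_of_pow
  intro ε hε
  have key : ∃ m : ℕ, 0 < m ∧ ∀ s ∈ Metric.sphere (0:ℂ) S, ‖(s • a + b) ^ m‖ ≤ ε ^ m := by
    have hpow : ∀ (x : A) (m k : ℕ), ‖x ^ m‖ ≤ ε ^ m → 0 < k → ‖x ^ (m * k)‖ ≤ ε ^ (m * k) := by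
      intro x m k hx hk
      rw [pow_mul, pow_mul]
      exact (norm_pow_le _ _).trans (by gcongr)
    refine (isCompact_sphere (0:ℂ) S).induction_on
      (p := fun T => ∃ m : ℕ, 0 < m ∧ ∀ s ∈ T, ‖(s • a + b) ^ m‖ ≤ ε ^ m) ⟨1, one_pos, by simp⟩ ?_ ?_ ?_
    · rintro s t hst ⟨m, hm, h'⟩
      exact ⟨m, hm, fun x hx => h' x (hst hx)⟩
    · rintro s t ⟨m, hm, h1⟩ ⟨k, hk, h2⟩
      refine ⟨m * k, Nat.mul_pos hm hk, ?_⟩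
      rintro x (hx | hx)
      · exact hpow _ _ _ (h1 x hx) hk
      · rw [mul_comm]; exact hpow _ _ _ (h2 x hx) hm
    · intro s hs
      have hs' : ‖s‖ = S := by simpa using hs
      obtain ⟨m, hm, hm0⟩ := (((h s hs').exists_pow (half_pos hε)).and (Filter.eventually_gt_atTop 0)).exists
      have hlt : ‖(s • a + b) ^ m‖ < ε ^ m :=
        lt_of_le_of_lt hm (pow_lt_pow_left₀ (by linarith) (by positivity) hm0.ne')
      have hc : Continuous fun s : ℂ => ‖(s • a + b) ^ m‖ := by fun_prop
      refine ⟨{x | ‖(x • a + b) ^ m‖ < ε ^ m}, ?_, m, hm0, fun x hx => le_of_lt hx⟩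
      exact mem_nhdsWithin_of_mem_nhds ((isOpen_lt hc continuous_const).mem_nhds hlt)
  obtain ⟨m, hm0, hm⟩ := key
  refine ⟨m, hm0, ?_⟩
  have hd : Differentiable ℂ fun s : ℂ => (s • a + b) ^ m := by fun_prop
  have := Complex.norm_le_of_forall_mem_frontier_norm_le (U := Metric.ball (0:ℂ) S)
    Metric.isBounded_ball (f := fun s : ℂ => (s • a + b) ^ m) hd.diffContOnCl (C := ε ^ m)
    (by rw [frontier_ball _ hS.ne']; exact hm) (z := 0) (subset_closure (by simpa using hS))
  simpa using this

theorem exists_catalan {g : A} (h : QN g) :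
    ∃ C : A, C = 1 + g * (C * C) ∧ ∀ b : A, Commute b g → Commute b C := by
  have hcat : ∀ n, catalan n ≤ 4 ^ n := fun n => by
    rw [catalan_eq_centralBinom_div]
    exact (Nat.div_le_self _ _).trans (Nat.centralBinom_le_four_pow n)
  have hs : Summable fun n => ‖catalan n • g ^ n‖ := by
    refine Summable.of_nonneg_of_le (fun _ => norm_nonneg _) (fun n => ?_)
      (h.summable (R := 4) (by norm_num))
    refine (norm_nsmul_le).trans ?_
    rw [mul_comm]
    gcongr
    exact_mod_cast hcat n
  refine ⟨∑' n, catalan n • g ^ n, ?_, ?_⟩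
  · conv_lhs => rw [hs.of_norm.tsum_eq_zero_add]
    rw [tsum_mul_tsum_eq_tsum_sum_antidiagonal_of_summable_norm hs hs]
    rw [← (summable_norm_sum_mul_antidiagonal_of_summable_norm hs hs).of_norm.tsum_mul_left]
    congr 1
    · simp
    · congr 1
      ext n
      rw [catalan_succ', Finset.sum_smul, Finset.mul_sum]
      refine Finset.sum_congr rfl fun x hx => ?_
      rw [Finset.HasAntidiagonal.mem_antidiagonal] at hx
      rw [smul_mul_smul_comm, ← pow_add, hx, mul_smul_comm, ← pow_succ']
  · intro b hb
    exact Commute.tsum_right _ fun n => (hb.pow_right n).smul_right _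

theorem exists_idem_near {b : A} (h : QN (b * b - b)) :
    ∃ u : A, Commute b u ∧
      (b + (b * b - b) * u) * (b + (b * b - b) * u) = b + (b * b - b) * u := by
  set c := b * b - b with hc
  have hbc : Commute b c := by rw [hc]; exact ((Commute.refl b).mul_right (Commute.refl b)).sub_right (Commute.refl b)
  obtain ⟨v, hv⟩ : IsUnit (1 + 4 * c) := by
    have := (h.isUnit (z := -1/4) (by norm_num))
    have h2 : (1 + 4 * c) = algebraMap ℂ A (-4) * (algebraMap ℂ A (-1/4) - c) := by
      rw [mul_sub (algebraMap ℂ A (-4)), ← map_mul]; norm_num; rw [map_ofNat]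
    rw [h2]
    exact ((isUnit_iff_ne_zero.2 (by norm_num : (-4:ℂ) ≠ 0)).map (algebraMap ℂ A)).mul this
  have h4 : ∀ x : A, Commute x (4 : A) := fun x => Commute.ofNat_right x 4
  have hbv : Commute b (v : A) := by
    rw [hv]; exact (Commute.one_right b).add_right ((h4 b).mul_right hbc)
  have hbj : Commute b (↑v⁻¹ : A) := hbv.units_inv_right
  have hcj : Commute c (↑v⁻¹ : A) := by rw [hc]; exact (hbj.mul_left hbj).sub_left hbj
  set j : A := ↑v⁻¹ with hj
  have hvj : (1 + 4 * c) * j = 1 := by rw [← hv, hj]; simp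
  have hg : QN (c * j) := h.mul hcj
  have hbg : Commute b (c * j) := hbc.mul_right hbj
  obtain ⟨C, hC, hcomm⟩ := exists_catalan hg
  have hbC := hcomm b hbg
  have hcC : Commute c C := by rw [hc]; exact (hbC.mul_left hbC).sub_left hbC
  have hgC : Commute (c * j) C := hcomm _ (Commute.refl _)
  set g := c * j with hgdef
  set d := g * C with hd
  have hdd : d * d = d - g := by
    rw [hd]
    calc g * C * (g * C) = g * (C * g) * C := by noncomm_ring
      _ = g * (g * (C * C)) := by rw [← hgC.eq]; noncomm_ring
      _ = g * (C - 1) := by congr 1; rw [eq_sub_iff_add_eq, add_comm]; exact hC.symm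
      _ = g * C - g := by noncomm_ring
  have hbd : Commute b d := hbg.mul_right hbC
  set k := 1 - 2 * b with hk
  have h2 : ∀ x : A, Commute x (2 : A) := fun x => Commute.ofNat_right x 2
  have hbk : Commute b k := (Commute.one_right b).sub_right ((h2 b).mul_right (Commute.refl b))
  have hck : Commute c k := by rw [hc]; exact (hbk.mul_left hbk).sub_left hbk
  have hdk : Commute d k := (Commute.one_right d).sub_right ((h2 d).mul_right hbd.symm)
  have hkk : k * k = 1 + 4 * c := by rw [hk, hc]; noncomm_ring
  have heq : c * (k * (j * C)) = k * d := by
    rw [← mul_assoc, hck.eq, hd, hgdef]; noncomm_ring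
  refine ⟨k * (j * C), hbk.mul_right (hbj.mul_right hbC), ?_⟩
  rw [heq]
  have e1 : (k * d) * (k * d) = (1 + 4 * c) * (d - g) := by
    rw [← hkk, ← hdd]
    calc k * d * (k * d) = k * (d * k) * d := by noncomm_ring
      _ = _ := by rw [hdk.eq]; noncomm_ring
  have e2 : (1 + 4 * c) * g = c := by
    rw [hgdef, hcj.eq, ← mul_assoc, hvj, one_mul]
  have e3 : (b + k * d) * (b + k * d) = b * b + (2 * b) * (k * d) + (k * d) * (k * d) := by
    have : Commute b (k * d) := hbk.mul_right hbd
    calc (b + k * d) * (b + k * d) = b * b + b * (k * d) + (k * d) * b + (k * d) * (k * d) := by noncomm_ring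
      _ = _ := by rw [← this.eq]; noncomm_ring
  have e4 : 2 * b = 1 - k := by rw [hk]; noncomm_ring
  rw [e3, e1, mul_sub, e2, e4, ← hkk]
  have : b * b = c + b := by rw [hc]; noncomm_ring
  rw [this]
  noncomm_ring

open Polynomial in
theorem exists_riesz {a : A} (hf : (spectrum ℂ a).Finite) (h : ¬ QN a) :
    ∃ e v v' : A, e ≠ 0 ∧ e * e = e ∧ e = a * v ∧ e = v' * a := by
  have : Nontrivial A := NormOneClass.nontrivial
  obtain ⟨μ, hμ, hμ0⟩ := Set.not_subset.1 h
  have hμ0 : μ ≠ 0 := hμ0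
  let S := hf.toFinset.erase μ
  let Q : ℂ[X] := ∏ ν ∈ S, (X - C ν)
  have hQ : Q.eval μ ≠ 0 := by
    simp only [Q, eval_prod, eval_sub, eval_X, eval_C]
    refine Finset.prod_ne_zero_iff.2 fun ν hν => sub_ne_zero.2 ?_
    exact (Finset.ne_of_mem_erase hν).symm
  have hQ' : ∀ ν ∈ spectrum ℂ a, ν ≠ μ → Q.eval ν = 0 := by
    intro ν hν hne
    simp only [Q, eval_prod, eval_sub, eval_X, eval_C]
    exact Finset.prod_eq_zero (i := ν) (by simp [S, hne, hν]) (sub_self _)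
  let P : ℂ[X] := X * (C ((μ * Q.eval μ)⁻¹) * Q)
  have hP1 : P.eval μ = 1 := by
    simp only [P, eval_mul, eval_X, eval_C]; field_simp
  have hP0 : ∀ ν ∈ spectrum ℂ a, ν ≠ μ → P.eval ν = 0 := by
    intro ν hν hne
    simp [P, hQ' ν hν hne]
  set b := aeval a P with hb
  have hqn : QN (b * b - b) := by
    have : b * b - b = aeval a (P * P - P) := by simp [hb]
    rw [this, QN, spectrum.map_polynomial_aeval]
    rintro _ ⟨ν, hν, rfl⟩
    by_cases hne : ν = μ
    · simp [hne, hP1]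
    · simp [hP0 ν hν hne]
  have hbq : ¬ QN b := by
    intro hq
    rw [hb, QN, spectrum.map_polynomial_aeval] at hq
    have := hq ⟨μ, hμ, rfl⟩
    simp [hP1] at this
  obtain ⟨u, hu, hidem⟩ := exists_idem_near hqn
  set w := aeval a (C ((μ * Q.eval μ)⁻¹) * Q) with hw
  have hbw : b = a * w := by simp only [hb, P, hw, map_mul, aeval_X]
  have hab : a * w = w * a := by
    rw [← hbw]; simp only [hb, P, hw, mul_comm X, map_mul, aeval_X]
  refine ⟨_, w * (1 + (b - 1) * u), (1 + (b - 1) * u) * w, ?_, hidem, ?_, ?_⟩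
  · intro h0
    apply hbq
    have h1 : b = (b * b - b) * (-u) := by
      rw [mul_neg, ← sub_eq_zero, sub_neg_eq_add, h0]
    rw [h1]
    exact hqn.mul ((hu.mul_left hu).sub_left hu).neg_right
  · rw [← mul_assoc, ← hbw]; noncomm_ring
  · have h1 : Commute b (1 + (b - 1) * u) :=
      (Commute.one_right b).add_right
        (((Commute.refl b).sub_right (Commute.one_right b)).mul_right hu)
    rw [mul_assoc, ← hab, ← hbw, ← h1.eq]; noncomm_ring

theorem QN.spec {a : A} (h : QN a) : spectrum ℂ a = {0} := by
  have : Nontrivial A := NormOneClass.nontrivial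
  exact (spectrum.nonempty a).subset_singleton_iff.1 h

theorem QN.card {a : A} (h : QN a) : (spectrum ℂ a).encard = 1 := by
  rw [h.spec, Set.encard_singleton]

theorem qn_of_card {a : A} (h : (spectrum ℂ a).encard = 1) (hu : ¬ IsUnit a) : QN a := by
  obtain ⟨z, hz⟩ := Set.encard_eq_one.1 h
  have h0 : (0 : ℂ) ∈ spectrum ℂ a := spectrum.zero_mem ℂ hu
  rw [hz] at h0
  rw [QN, hz, ← Set.mem_singleton_iff.1 h0]

theorem qn_zero : QN (0 : A) := by
  have : Nontrivial A := NormOneClass.nontrivial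
  rw [QN, spectrum.zero_eq]

theorem qn_of_sq {a : A} (h : a * a = 0) : QN a :=
  qn_of_pow fun ε hε => ⟨2, two_pos, by rw [pow_two, h, norm_zero]; positivity⟩

theorem card_smul {t : ℂ} (ht : t ≠ 0) (a : A) :
    (spectrum ℂ (t • a)).encard = (spectrum ℂ a).encard := by
  have := spectrum.unit_smul_eq_smul a (Units.mk0 t ht)
  have h2 : spectrum ℂ (t • a) = (fun z => t * z) '' spectrum ℂ a := this
  rw [h2]
  exact (mul_right_injective₀ ht).encard_image _

theorem finite_smul {t : ℂ} (ht : t ≠ 0) (a : A) (h : (spectrum ℂ (t • a)).Finite) :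
    (spectrum ℂ a).Finite := by
  rw [← Set.encard_lt_top_iff] at *
  rwa [card_smul ht] at h

theorem idem_qn {e : A} (he : e * e = e) (h : QN e) : e = 0 :=
  h.idem_eq_zero he he

/-- the case where `p` is nonzero, after reduction to global equality of cardinalities -/
theorem main_case (hss : JacobsonSemisimple A) {p q : A} (hp : p * p = p) (hp0 : p ≠ 0)
    (hqp : q * p = q)
    (H : ∀ y, (spectrum ℂ (p * y)).Finite ∧
      (spectrum ℂ (q * y)).encard = (spectrum ℂ (p * y)).encard) : ∃ lam : ℂ, q = lam • p := by
  have : Nontrivial A := NormOneClass.nontrivial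
  -- `p q = q`
  have hpq : p * q = q := by
    have h1 : ∀ w, QN (q * (w * (1 - p))) := by
      intro w
      have h2 : QN (p * (w * (1 - p))) := by
        apply qn_of_sq
        calc p * (w * (1 - p)) * (p * (w * (1 - p)))
            = p * w * (p - p * p) * w * (1 - p) := by noncomm_ring
          _ = 0 := by rw [hp]; simp
      apply qn_of_card (by rw [(H _).2, h2.card])
      intro hu
      have h3 : q * (w * (1 - p)) * p = 0 := by
        calc q * (w * (1 - p)) * p = q * w * (p - p * p) := by noncomm_ring
          _ = 0 := by rw [hp]; simp
      exact hp0 ((hu.mul_right_eq_zero).1 h3)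
    have h4 : (1 - p) * q = 0 := by
      apply eq_zero_of_qn hss
      intro w
      have := (h1 w)
      rw [← mul_assoc] at this
      have := this.comm
      rwa [← mul_assoc] at this
    rw [sub_mul, one_mul, sub_eq_zero] at h4
    exact h4.symm
  -- multiplication by `q` preserves quasinilpotents
  have star : ∀ y, QN (p * y) → QN (q * y) := by
    intro y hy
    have hc : (spectrum ℂ (q * y)).encard = 1 := by rw [(H y).2, hy.card]
    apply qn_of_card hc
    intro hu
    by_cases hp1 : p = 1
    · subst hp1
      rw [one_mul] at hy
      obtain ⟨v, hv⟩ := hu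
      apply hy.no_left_inv (w := ↑v⁻¹ * q)
      rw [mul_assoc, ← hv]; simp
    · have : (1 - p) * (q * y) = 0 := by
        rw [← mul_assoc, sub_mul, hpq]; simp
      have := (hu.mul_left_eq_zero).1 this
      exact hp1 (sub_eq_zero.1 this).symm
  have half : ∀ e f : A, f * e = 0 → p * e = e → f * q * e = 0 := by
    intro e f hfe hpe
    apply eq_zero_of_qn hss
    intro w
    have h1 : QN (p * (e * w * f)) := by
      apply qn_of_sq
      have hx : p * (e * w * f) = e * w * f := by rw [← mul_assoc, ← mul_assoc, hpe]
      rw [hx]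
      calc e * w * f * (e * w * f) = e * w * (f * e) * w * f := by noncomm_ring
        _ = 0 := by rw [hfe]; simp
    have h2 := star _ h1
    rw [← mul_assoc] at h2
    have h3 := h2.comm
    have h4 : f * (q * (e * w)) = f * q * e * w := by noncomm_ring
    rwa [h4] at h3
  have hcomm : ∀ e : A, e * e = e → p * e = e → e * p = e → q * e = e * q := by
    intro e he hpe hep
    have h1 := half e (p - e) (by rw [sub_mul, hpe, he, sub_self]) hpe
    have h2 := half (p - e) e (by rw [mul_sub, hep, he, sub_self]) (by rw [mul_sub, hpe, hp])
    rw [sub_mul, hpq, sub_mul, sub_eq_zero] at h1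
    rw [mul_sub, mul_assoc e q p, hqp, sub_eq_zero] at h2
    exact h1.trans h2.symm
  -- the nilpotent part
  have hlam : ∃ lam : ℂ, QN (q - lam • p) := by
    by_cases hp1 : p = 1
    · have h1 := (H p).2
      rw [hqp, hp, hp1, spectrum.one_eq, Set.encard_singleton] at h1
      obtain ⟨lam, hl⟩ := Set.encard_eq_one.1 h1
      refine ⟨lam, ?_⟩
      rw [hp1, QN, ← Algebra.algebraMap_eq_smul_one, ← spectrum.sub_singleton_eq, hl]
      simp
    · have hr : (1 - p) ≠ 0 := fun h => hp1 (sub_eq_zero.1 h).symm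
      have nu : ∀ x, p * x = x → ¬ IsUnit x := by
        intro x hx hu
        have : (1 - p) * x = 0 := by rw [sub_mul, hx]; simp
        exact hr ((hu.mul_left_eq_zero).1 this)
      have hqn : ¬ QN q := by
        intro hq
        have h1 := (H p).2
        rw [hqp, hp, hq.card] at h1
        exact hp0 (idem_qn hp (qn_of_card h1.symm (nu p hp)))
      obtain ⟨lam, hl, hl0⟩ := Set.not_subset.1 hqn
      have hl0 : lam ≠ 0 := hl0
      have hcard : (spectrum ℂ q).encard ≤ 2 := by
        have h1 := (H p).2
        rw [hqp, hp] at h1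
        rw [h1]
        have h2 : spectrum ℂ p ⊆ {0, 1} := by
          have : IsIdempotentElem p := hp
          exact this.spectrum_subset ℂ
        exact (Set.encard_le_encard h2).trans (Set.encard_insert_le _ _ |>.trans (by simp; norm_num))
      have hspec : spectrum ℂ q = {0, lam} := by
        symm
        apply Set.Finite.eq_of_subset_of_encard_le
        · exact Set.toFinite _
        · rintro z (rfl | rfl)
          · exact spectrum.zero_mem ℂ (nu q hpq)
          · exact hl
        · rw [Set.encard_pair hl0.symm]; exact hcard
      have hcq : QN ((lam⁻¹ • q) * (lam⁻¹ • q) - lam⁻¹ • q) := by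
        have h1 : (lam⁻¹ • q) * (lam⁻¹ • q) - lam⁻¹ • q =
            Polynomial.aeval q ((Polynomial.C lam⁻¹ * Polynomial.X) *
              (Polynomial.C lam⁻¹ * Polynomial.X) - Polynomial.C lam⁻¹ * Polynomial.X) := by
          simp [Algebra.smul_def]
        rw [h1, QN, spectrum.map_polynomial_aeval, hspec]
        rintro _ ⟨z, (rfl | rfl), rfl⟩
        · simp
        · simp [hl0]
      set b := lam⁻¹ • q with hb
      have hqb : q = lam • b := by rw [hb, smul_smul, mul_inv_cancel₀ hl0, one_smul]
      obtain ⟨u, hu, hidem⟩ := exists_idem_near hcq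
      set c := b * b - b with hc
      have hcu : Commute c u := (hu.mul_left hu).sub_left hu
      have hbc : Commute b c :=
        ((Commute.refl b).mul_right (Commute.refl b)).sub_right (Commute.refl b)
      set e := b + c * u with he
      have hpb : p * b = b := by rw [hb, mul_smul_comm, hpq]
      have hbp : b * p = b := by rw [hb, smul_mul_assoc, hqp]
      have hpe : p * e = e := by
        rw [he, mul_add, hpb, ← mul_assoc, hc, mul_sub, ← mul_assoc, hpb]
      have hep : e * p = e := by
        rw [he, hcu.eq, add_mul, hbp, mul_assoc, hc, sub_mul, mul_assoc, hbp]
      have hbe : Commute b e := (Commute.refl b).add_right (hbc.mul_right hu)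
      have hff : (p - e) * (p - e) = p - e := by
        rw [mul_sub, sub_mul, sub_mul, hp, hpe, hep, hidem]; simp
      have hqf : QN (q * (p - e)) := by
        have h1 : q * (p - e) = lam • (c * (-(1 + b * u))) := by
          rw [hqb, smul_mul_assoc]
          congr 1
          rw [mul_sub, hbp, he, mul_add, ← mul_assoc, hbc.eq]
          have : b * b = c + b := by rw [hc]; noncomm_ring
          rw [this]; noncomm_ring
        rw [h1]
        exact (hcq.mul ((Commute.one_right c).add_right
          (hbc.symm.mul_right hcu)).neg_right).smul _
      have hf0 : p - e = 0 := by
        have h1 := (H (p - e)).2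
        rw [hqf.card, mul_sub, hp, hpe] at h1
        exact idem_qn hff (qn_of_card h1.symm (nu _ (by rw [mul_sub, hp, hpe])))
      refine ⟨lam, ?_⟩
      have h1 : q - lam • p = lam • (c * (-u)) := by
        rw [sub_eq_zero.1 hf0, hqb, ← smul_sub, he]; congr 1; noncomm_ring
      rw [h1]
      exact (hcq.mul hcu.neg_right).smul _
  obtain ⟨lam, hn⟩ := hlam
  refine ⟨lam, sub_eq_zero.1 ?_⟩
  have hpn : p * (q - lam • p) = q - lam • p := by rw [mul_sub, hpq, mul_smul_comm, hp]
  have hnp : (q - lam • p) * p = q - lam • p := by rw [sub_mul, hqp, smul_mul_assoc, hp]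
  have hnc : ∀ e : A, e * e = e → p * e = e → e * p = e →
      (q - lam • p) * e = e * (q - lam • p) := by
    intro e he hpe hep
    rw [sub_mul, mul_sub, hcomm e he hpe hep, smul_mul_assoc, mul_smul_comm, hpe, hep]
  generalize q - lam • p = n at hn hpn hnp hnc
  apply eq_zero_of_qn hss
  intro y
  suffices hs : QN (n * (y * p)) by
    have h1 : n * y = p * (n * y) := by rw [← mul_assoc, hpn]
    rw [h1]
    apply QN.comm
    rwa [mul_assoc]
  by_contra hcon
  have hfin : (spectrum ℂ (n * (y * p))).Finite := by
    have := (H (n * (y * p))).1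
    rwa [← mul_assoc p, hpn] at this
  obtain ⟨e, v, v', he0, hee, hev, hev'⟩ := exists_riesz hfin hcon
  apply he0
  have hpe : p * e = e := by rw [hev, ← mul_assoc, ← mul_assoc, hpn]
  have hep : e * p = e := by
    rw [hev']
    simp only [mul_assoc, hp]
  have hne := hnc e hee hpe hep
  apply hn.idem_eq_zero (w := e * (y * p * v * e))
  · rw [← mul_assoc, hne]
    calc e * n * (y * p * v * e) = e * (n * (y * p) * v) * e := by noncomm_ring
      _ = e := by rw [← hev, hee, hee]
  · rw [← mul_assoc, hee]

end helpers

theorem scalar_multiple_of_card_spectrum_eq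
    {A : Type*} [NormedRing A] [NormOneClass A] [NormedAlgebra ℂ A] [CompleteSpace A]
    (hss : JacobsonSemisimple A) (p q : A) (hp : p * p = p)
    (h : ∃ Np ∈ nhds p, ∃ Nq ∈ nhds ((1 : A) - p), ∀ x ∈ Np ∪ Nq,
      (spectrum ℂ (p * x)).Finite ∧
        (spectrum ℂ (q * x)).encard = (spectrum ℂ (p * x)).encard) :
    (∃ lam : ℂ, q = lam • p) ∨ (∃ lam : ℂ, q = lam • (1 : A)) := by
  have : Nontrivial A := NormOneClass.nontrivial
  obtain ⟨Np, hNp, Nq, hNq, h⟩ := h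
  -- scaling
  have scale : ∀ (x0 : A) (N : Set A), N ∈ nhds x0 → ∀ y : A,
      ∃ t : ℂ, t ≠ 0 ∧ x0 + t • y ∈ N := by
    intro x0 N hN y
    have hc : Filter.Tendsto (fun t : ℂ => x0 + t • y) (nhds 0) (nhds x0) := by
      have : Continuous fun t : ℂ => x0 + t • y := by fun_prop
      simpa using this.tendsto 0
    have h1 : ∀ᶠ t in nhdsWithin (0:ℂ) {0}ᶜ, x0 + t • y ∈ N :=
      (hc.eventually hN).filter_mono nhdsWithin_le_nhds
    obtain ⟨t, ht, ht0⟩ := (h1.and self_mem_nhdsWithin).exists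
    exact ⟨t, ht0, ht⟩
  by_cases hp0 : p = 0
  · right
    subst hp0
    have H : ∀ y, (spectrum ℂ (q * y)).encard = 1 := by
      intro y
      obtain ⟨t, ht, hm⟩ := scale 0 Np hNp y
      have := (h _ (Or.inl hm)).2
      rwa [zero_add, zero_mul, mul_smul_comm, card_smul ht, qn_zero.card] at this
    by_cases hq : ∀ y, QN (q * y)
    · exact ⟨0, by rw [eq_zero_of_qn hss hq, zero_smul]⟩
    push Not at hq
    obtain ⟨y, hy⟩ := hq
    have hu : IsUnit (q * y) := by
      by_contra hu
      exact hy (qn_of_card (H y) hu)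
    obtain ⟨v, hv⟩ := hu
    have H2 : ∀ z : A, (spectrum ℂ z).encard = 1 := by
      intro z
      have := H (y * ↑v⁻¹ * z)
      rwa [← mul_assoc, ← mul_assoc, ← hv, Units.mul_inv, one_mul] at this
    obtain ⟨lam, hl⟩ := Set.encard_eq_one.1 (H2 q)
    refine ⟨lam, sub_eq_zero.1 ?_⟩
    have hn : QN (q - lam • (1 : A)) := by
      rw [QN, ← Algebra.algebraMap_eq_smul_one, ← spectrum.sub_singleton_eq, hl]
      simp
    generalize q - lam • (1 : A) = n at hn
    apply eq_zero_of_qn hss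
    intro w
    apply QN.comm
    apply qn_of_card (H2 _)
    rintro ⟨v, hv⟩
    apply hn.no_left_inv (w := ↑v⁻¹ * w)
    rw [mul_assoc, ← hv]; simp
  · left
    -- `q (1 - p) = 0`
    have hrr : p * (1 - p) = 0 := by rw [mul_sub, hp]; simp
    have hr0 : q * (1 - p) = 0 := by
      apply eq_zero_of_qn hss
      intro w
      -- quasinilpotent near `1`
      have hnear : ∀ᶠ z in nhds (1 : A), QN (q * (1 - p) * z) := by
        have hc : Filter.Tendsto (fun z : A => (1 - p) * z) (nhds 1) (nhds (1 - p)) := by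
          have : Continuous fun z : A => (1 - p) * z := by fun_prop
          simpa using this.tendsto 1
        filter_upwards [hc.eventually hNq, Units.isOpen.mem_nhds (isUnit_one (M := A))] with z hz hu
        have h1 := (h _ (Or.inr hz)).2
        rw [← mul_assoc p, hrr, zero_mul, qn_zero.card, ← mul_assoc] at h1
        apply qn_of_card h1
        intro hu2
        have hz : IsUnit z := hu
        have h3 : IsUnit (q * (1 - p)) := by
          obtain ⟨v, rfl⟩ := hz
          exact (Units.isUnit_mul_units _ v).1 hu2
        have h4 : q * (1 - p) * p = 0 := by
          rw [mul_assoc, sub_mul, hp]; simp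
        exact hp0 ((h3.mul_right_eq_zero).1 h4)
      have hc : Filter.Tendsto (fun t : ℂ => 1 + t • w) (nhds 0) (nhds (1:A)) := by
        have : Continuous fun t : ℂ => 1 + t • w := by fun_prop
        simpa using this.tendsto 0
      obtain ⟨δ, hδ, hball⟩ := Metric.eventually_nhds_iff.1 (hc.eventually hnear)
      apply qn_of_large (a := q * (1 - p)) (S := 2 / δ) (by positivity)
      intro s hs
      have hs0 : s ≠ 0 := by
        rintro rfl
        rw [norm_zero] at hs
        have : 0 < 2 / δ := by positivity
        linarith
      have h1 : QN (q * (1 - p) * (1 + s⁻¹ • w)) := by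
        apply hball
        rw [dist_zero_right, norm_inv, hs, inv_div]
        linarith
      have h2 := h1.smul s
      have h3 : s • (q * (1 - p) * (1 + s⁻¹ • w)) = s • (q * (1 - p)) + q * (1 - p) * w := by
        rw [mul_add, mul_one, smul_add, mul_smul_comm, smul_smul, mul_inv_cancel₀ hs0, one_smul]
      rwa [h3] at h2
    have hqp : q * p = q := by
      rw [mul_sub, mul_one, sub_eq_zero] at hr0
      exact hr0.symm
    apply main_case hss hp hp0 hqp
    intro y
    obtain ⟨t, ht, hm⟩ := scale (1 - p) Nq hNq y
    have h1 := h _ (Or.inr hm)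
    rw [mul_add, mul_add, hrr, hr0, zero_add, zero_add, mul_smul_comm, mul_smul_comm,
      card_smul ht, card_smul ht] at h1
    exact ⟨finite_smul ht _ h1.1, h1.2⟩
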